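/- Let G be a pseudotree in simplest form whose unique cycle C_G has odd length, such that one vertex A of C_G has degree 3, all other vertices of C_G have degree 2, and B is the unique neighbor of A not on C_G. Then: if B has odd degree, the nim-value of graph chomp on G is at least 4; if B has even degree and v(G) is odd, g(G) = 3; and if B has even degree and v(G) is even, g(G) = 0. -/

import Mathlib

/-!
Write `p(H) = v + 2 e`, with `v` and `e` the numbers of vertices and edges of `H` reduced
modulo `2`. Every move changes `p`, and in terms of nim-sums deleting an edge turns `p` into
`p xor 2`, deleting a vertex of even degree into `p xor 1`, and deleting a vertex of odd degree
into `p xor 3`.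

* A bipartite graph has nim-value `p` (`grundy_bipartite`), since the vertices of even or odd degree
  needed to reach the smaller values exist by parity.
* Destroying the odd cycle of `G` leaves a forest, so from every position containing the cycle the
  moves on the cycle reach `p xor 2` (an edge) and `p xor 1` (a vertex of degree `2`), as well as
  `p xor 3` (the vertex `A`, of degree `3`) as long as the edge `{A, B}` is present.
* If `{A, B}` has been removed, the cycle is an isolated component and the nim-value is `p xor 3`
  (`OddCycleBranch.grundy_isolated`).
* If `{A, B}` is present and `B` has odd degree, deleting `B` gives an isolated cycle, with value
  `(p xor 3) xor 3 = p`; hence all of `0, 1, 2, 3` are reached and the nim-value is at least `4`.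
  If `B` has even degree, deleting `B` or `{A, B}` gives `p xor 2` or `p xor 1`, and every other
  move off the cycle gives, by induction, a value at least `4` or the new, different, value of `p`;
  so the nim-value is `p` (`OddCycleBranch.grundy_attached`).

The induction runs over all subpositions of `G` containing the cycle, including disconnected ones,
so no theory of sums of games is needed. As `G` has as many edges as vertices, `p(G)` is `3` or `0`
according to the parity of the number of vertices.
-/

attribute [local instance] Classical.propDecidable

/-- The minimal excludant of a finite set of naturals. -/
noncomputable def mex (s : Finset ℕ) : ℕ := sInf {n : ℕ | n ∉ s}

/-- The position resulting from choosing `σ` in subset take-away: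
remove `σ` together with every element containing it. -/
noncomputable def takeawayMove {V : Type*} [DecidableEq V] (Δ : Finset (Finset V))
    (σ : Finset V) : Finset (Finset V) :=
  Δ.filter (fun t => ¬ σ ⊆ t)

/-- The Grundy (nim-)value of subset take-away played on `Δ`: the minimal excludant of the
Grundy values of all positions reachable in one move. -/
noncomputable def grundy {V : Type*} [DecidableEq V] (Δ : Finset (Finset V)) : ℕ :=
  mex (Δ.attach.image (fun σ => grundy (takeawayMove Δ σ.1)))
termination_by Δ.card
decreasing_by
  simp only [takeawayMove]
  exact Finset.card_lt_card (Finset.filter_ssubset.mpr ⟨σ.1, σ.2, by simp⟩)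

/-- The simplicial complex of vertices and edges of a finite simple graph `G`.
Graph chomp on `G` is subset take-away on this complex, so the nim-value of graph chomp
on `G` is `grundy (graphComplex G)`. -/
noncomputable def graphComplex {V : Type*} [Fintype V] [DecidableEq V] (G : SimpleGraph V) :
    Finset (Finset V) :=
  (Finset.univ : Finset V).image (fun v => ({v} : Finset V)) ∪
    Finset.univ.filter (fun s : Finset V => ∃ u v, G.Adj u v ∧ s = {u, v})

/-- A graph `G` is in *simplest form* if the only involution of its vertex set mapping
edges to edges whose fixed point set (fixed vertices and fixed edges) is a simplicial
complex (i.e. both endpoints of every fixed edge are fixed vertices) is the identity. -/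
def SimplestForm {V : Type*} [DecidableEq V] (G : SimpleGraph V) : Prop :=
  ∀ τ : Equiv.Perm V, τ ^ 2 = 1 →
    (∀ u v : V, G.Adj u v → G.Adj (τ u) (τ v)) →
    (∀ u v : V, G.Adj u v → ({τ u, τ v} : Finset V) = {u, v} → τ u = u ∧ τ v = v) →
    τ = 1

/-! ### Minimal excludants and the Grundy recursion -/

section ChompAux

variable {V : Type*} [DecidableEq V]

lemma mex_not_mem (s : Finset ℕ) : mex s ∉ s := by
  have h : {n : ℕ | n ∉ s}.Nonempty := Infinite.exists_notMem_finset s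
  exact Nat.sInf_mem h

lemma mem_of_lt_mex {s : Finset ℕ} {m : ℕ} (h : m < mex s) : m ∈ s := by
  by_contra hm
  exact absurd (Nat.sInf_le (s := {n : ℕ | n ∉ s}) hm) (not_le.mpr h)

lemma le_mex {s : Finset ℕ} {n : ℕ} (h : ∀ m < n, m ∈ s) : n ≤ mex s := by
  by_contra hlt
  exact mex_not_mem s (h _ (not_le.mp hlt))

lemma le_grundy {Δ : Finset (Finset V)} {n : ℕ}
    (h : ∀ m < n, ∃ σ ∈ Δ, grundy (takeawayMove Δ σ) = m) : n ≤ grundy Δ := by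
  rw [grundy]
  refine le_mex fun m hm => ?_
  obtain ⟨σ, hσ, hg⟩ := h m hm
  exact Finset.mem_image.mpr ⟨⟨σ, hσ⟩, Finset.mem_attach _ _, hg⟩

lemma grundy_eq {Δ : Finset (Finset V)} {n : ℕ}
    (h₁ : ∀ σ ∈ Δ, grundy (takeawayMove Δ σ) ≠ n)
    (h₂ : ∀ m < n, ∃ σ ∈ Δ, grundy (takeawayMove Δ σ) = m) : grundy Δ = n := by
  refine le_antisymm ?_ (le_grundy h₂)
  by_contra hlt
  rw [grundy] at hlt
  obtain ⟨σ, -, hg⟩ := Finset.mem_image.mp (mem_of_lt_mex (not_le.mp hlt))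
  exact h₁ σ.1 σ.2 hg

/-! ### Positions, parities and degrees -/

/-- `Δ` consists of the vertices (as singletons) and the edges (as pairs) of a graph. -/
def IsPosition (Δ : Finset (Finset V)) : Prop :=
  (∀ t ∈ Δ, t.card = 1 ∨ t.card = 2) ∧ ∀ t ∈ Δ, ∀ v ∈ t, {v} ∈ Δ

/-- The number of vertices of the position `Δ`. -/
def vertexCount (Δ : Finset (Finset V)) : ℕ := (Δ.filter fun t => t.card = 1).card

/-- The number of edges of the position `Δ`. -/
def edgeCount (Δ : Finset (Finset V)) : ℕ := (Δ.filter fun t => t.card = 2).card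

/-- The degree of the vertex `v` in the position `Δ`. -/
def posDegree (Δ : Finset (Finset V)) (v : V) : ℕ :=
  (Δ.filter fun t => t.card = 2 ∧ v ∈ t).card

/-- The value `v + 2 e` with `v` and `e` reduced modulo `2`: the nim-value of a bipartite
graph with `v` vertices and `e` edges. -/
def parityValue (v e : ℕ) : ℕ := v % 2 + 2 * (e % 2)

lemma mem_move {Δ : Finset (Finset V)} {σ t : Finset V} :
    t ∈ takeawayMove Δ σ ↔ t ∈ Δ ∧ ¬ σ ⊆ t := by
  simp [takeawayMove]

lemma move_subset (Δ : Finset (Finset V)) (σ : Finset V) : takeawayMove Δ σ ⊆ Δ :=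
  fun _ ht => (mem_move.mp ht).1

lemma card_move_lt {Δ : Finset (Finset V)} {σ : Finset V} (hσ : σ ∈ Δ) :
    (takeawayMove Δ σ).card < Δ.card :=
  Finset.card_lt_card ⟨move_subset Δ σ, fun h => (mem_move.mp (h hσ)).2 subset_rfl⟩

lemma IsPosition.move {Δ : Finset (Finset V)} (h : IsPosition Δ) (σ : Finset V) :
    IsPosition (takeawayMove Δ σ) := by
  refine ⟨fun t ht => h.1 t (mem_move.mp ht).1, fun t ht v hv => mem_move.mpr ⟨?_, ?_⟩⟩
  · exact h.2 t (mem_move.mp ht).1 v hv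
  · exact fun hs => (mem_move.mp ht).2 (hs.trans (by simpa using hv))

lemma IsPosition.cases {Δ : Finset (Finset V)} (h : IsPosition Δ) {σ : Finset V}
    (hσ : σ ∈ Δ) : (∃ v, σ = {v}) ∨ ∃ u v, u ≠ v ∧ σ = {u, v} := by
  rcases h.1 σ hσ with h | h
  · exact Or.inl (Finset.card_eq_one.mp h)
  · obtain ⟨u, v, huv, rfl⟩ := Finset.card_eq_two.mp h
    exact Or.inr ⟨u, v, huv, rfl⟩

lemma vertexCount_move_vertex {Δ : Finset (Finset V)} {v : V} (hv : {v} ∈ Δ) :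
    vertexCount (takeawayMove Δ {v}) + 1 = vertexCount Δ := by
  have : (Δ.filter fun t => t.card = 1) =
      insert {v} ((takeawayMove Δ {v}).filter fun t => t.card = 1) := by
    ext t
    simp only [Finset.mem_filter, Finset.mem_insert, mem_move, Finset.singleton_subset_iff]
    constructor
    · rintro ⟨ht, h1⟩
      obtain ⟨x, rfl⟩ := Finset.card_eq_one.mp h1
      by_cases hx : v = x
      · exact Or.inl (by rw [hx])
      · exact Or.inr ⟨⟨ht, by simpa using hx⟩, h1⟩
    · rintro (rfl | ⟨⟨ht, -⟩, h1⟩)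
      · exact ⟨hv, by simp⟩
      · exact ⟨ht, h1⟩
  rw [vertexCount, vertexCount, this, Finset.card_insert_of_notMem]
  simp [mem_move]

lemma edgeCount_move_vertex (Δ : Finset (Finset V)) (v : V) :
    edgeCount (takeawayMove Δ {v}) + posDegree Δ v = edgeCount Δ := by
  rw [edgeCount, posDegree, edgeCount, ← Finset.card_union_of_disjoint]
  · congr 1
    ext t
    simp only [Finset.mem_union, Finset.mem_filter, mem_move, Finset.singleton_subset_iff]
    tauto
  · rw [Finset.disjoint_left]
    intro t ht ht'
    simp only [Finset.mem_filter, mem_move, Finset.singleton_subset_iff] at ht ht'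
    tauto

/-- In a position, the only cell containing a given edge is that edge. -/
lemma mem_move_edge {Δ : Finset (Finset V)} (h : IsPosition Δ) {e t : Finset V}
    (he : e.card = 2) : t ∈ takeawayMove Δ e ↔ t ∈ Δ ∧ t ≠ e := by
  rw [mem_move]
  refine and_congr_right fun ht => not_congr ⟨fun hs => ?_, fun h => h ▸ subset_rfl⟩
  refine (Finset.eq_of_subset_of_card_le hs ?_).symm
  have := h.1 t ht
  omega

lemma vertexCount_move_edge {Δ : Finset (Finset V)} (h : IsPosition Δ) {e : Finset V}
    (he : e.card = 2) : vertexCount (takeawayMove Δ e) = vertexCount Δ := by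
  rw [vertexCount, vertexCount]
  congr 1
  ext t
  simp only [Finset.mem_filter, mem_move_edge h he]
  refine ⟨fun ⟨⟨ht, _⟩, h1⟩ => ⟨ht, h1⟩, fun ⟨ht, h1⟩ => ⟨⟨ht, ?_⟩, h1⟩⟩
  rintro rfl
  omega

lemma edgeCount_move_edge {Δ : Finset (Finset V)} (h : IsPosition Δ) {e : Finset V}
    (heΔ : e ∈ Δ) (he : e.card = 2) : edgeCount (takeawayMove Δ e) + 1 = edgeCount Δ := by
  have : (Δ.filter fun t => t.card = 2) =
      insert e ((takeawayMove Δ e).filter fun t => t.card = 2) := by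
    ext t
    simp only [Finset.mem_filter, Finset.mem_insert, mem_move_edge h he]
    by_cases hte : t = e
    · subst hte; tauto
    · tauto
  rw [edgeCount, edgeCount, this, Finset.card_insert_of_notMem]
  simp [mem_move]

/-- Every move changes one of the two parities: an edge deletion changes that of the number of
edges, a vertex deletion that of the number of vertices. -/
lemma parity_move_ne {Δ : Finset (Finset V)} (h : IsPosition Δ) {σ : Finset V} (hσ : σ ∈ Δ) :
    (vertexCount (takeawayMove Δ σ) % 2 ≠ vertexCount Δ % 2) ∨
      (edgeCount (takeawayMove Δ σ) % 2 ≠ edgeCount Δ % 2) := by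
  rcases h.1 σ hσ with h1 | h2
  · obtain ⟨v, rfl⟩ := Finset.card_eq_one.mp h1
    have := vertexCount_move_vertex hσ
    omega
  · have := edgeCount_move_edge h hσ h2
    omega

lemma mem_of_posDegree_pos {Δ : Finset (Finset V)} (h : IsPosition Δ) {v : V}
    (hv : posDegree Δ v ≠ 0) : {v} ∈ Δ := by
  obtain ⟨t, ht⟩ := Finset.card_pos.mp (Nat.pos_of_ne_zero hv)
  simp only [Finset.mem_filter] at ht
  exact h.2 t ht.1 v ht.2.2

/-! ### Bipartite positions -/

/-- The colouring `f` is proper on the edges of `Δ`. -/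
def ProperOn (f : V → Bool) (Δ : Finset (Finset V)) : Prop :=
  ∀ u v, u ≠ v → ({u, v} : Finset V) ∈ Δ → f u ≠ f v

/-- In a properly `2`-coloured position, every edge has exactly one endpoint of a given colour. -/
lemma sum_posDegree [Fintype V] {Δ : Finset (Finset V)} {f : V → Bool} (hf : ProperOn f Δ)
    (b : Bool) :
    ∑ v ∈ Finset.univ.filter (fun v => f v = b), posDegree Δ v = edgeCount Δ := by
  have h1 : ∀ v, posDegree Δ v =
      (((Δ.filter fun t => t.card = 2)).bipartiteAbove (fun (v : V) t => v ∈ t) v).card := by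
    intro v
    rw [posDegree, Finset.bipartiteAbove, Finset.filter_filter]
  simp only [h1]
  rw [Finset.sum_card_bipartiteAbove_eq_sum_card_bipartiteBelow, edgeCount,
    Finset.card_eq_sum_ones]
  refine Finset.sum_congr rfl fun t ht => ?_
  obtain ⟨htΔ, ht2⟩ := Finset.mem_filter.mp ht
  obtain ⟨u, v, huv, rfl⟩ := Finset.card_eq_two.mp ht2
  have hfuv := hf u v huv htΔ
  rw [Finset.bipartiteBelow, Finset.filter_filter, Finset.card_eq_one]
  by_cases hu : f u = b
  · refine ⟨u, ?_⟩
    ext x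
    simp only [Finset.mem_filter, Finset.mem_univ, true_and, Finset.mem_insert,
      Finset.mem_singleton]
    grind
  · refine ⟨v, ?_⟩
    ext x
    simp only [Finset.mem_filter, Finset.mem_univ, true_and, Finset.mem_insert,
      Finset.mem_singleton]
    cases b <;> grind

lemma exists_odd_posDegree [Fintype V] {Δ : Finset (Finset V)} {f : V → Bool} (hf : ProperOn f Δ)
    (b : Bool) (hodd : Odd (edgeCount Δ)) : ∃ v, f v = b ∧ Odd (posDegree Δ v) := by
  rw [← sum_posDegree hf b] at hodd
  by_contra! hcon
  refine Nat.not_even_iff_odd.mpr hodd (Finset.even_sum _ fun v hv => ?_)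
  exact Nat.not_odd_iff_even.mp (hcon v (Finset.mem_filter.mp hv).2)

lemma exists_even_posDegree [Fintype V] {Δ : Finset (Finset V)} (h : IsPosition Δ) {f : V → Bool}
    (hf : ProperOn f Δ) (hodd : Odd (vertexCount Δ)) :
    ∃ v, {v} ∈ Δ ∧ Even (posDegree Δ v) := by
  by_contra! hcon
  have hsum : Even (∑ v, posDegree Δ v) := by
    have e : ∑ v, posDegree Δ v = edgeCount Δ + edgeCount Δ := by
      nth_rewrite 1 [← sum_posDegree hf true]
      rw [← sum_posDegree hf false,
        ← Finset.sum_filter_add_sum_filter_not Finset.univ (fun v => f v = true)]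
      simp
    exact e ▸ ⟨_, rfl⟩
  have hset : (Finset.univ.filter fun v => Odd (posDegree Δ v)).image
      (fun v => ({v} : Finset V)) = Δ.filter fun t => t.card = 1 := by
    ext t
    simp only [Finset.mem_image, Finset.mem_filter, Finset.mem_univ, true_and]
    constructor
    · rintro ⟨v, hv, rfl⟩
      exact ⟨mem_of_posDegree_pos h hv.pos.ne', by simp⟩
    · rintro ⟨ht, h1⟩
      obtain ⟨v, rfl⟩ := Finset.card_eq_one.mp h1
      exact ⟨v, Nat.not_even_iff_odd.mp (hcon v ht), rfl⟩
  rw [vertexCount, ← hset, Finset.card_image_of_injective _ Finset.singleton_injective,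
    ← Finset.odd_sum_iff_odd_card_odd] at hodd
  exact Nat.not_even_iff_odd.mpr hodd hsum

/-- The nim-value of graph chomp on a bipartite graph depends only on the parities of the numbers
of vertices and edges. Every move changes a parity, so the value itself is never repeated; the
smaller values are reached by deleting an edge, a vertex of even degree (which exists when the
number of vertices is odd, by the handshake lemma) or a vertex of odd degree (which exists when
the number of edges is odd, by counting edges from one colour class). -/
lemma grundy_bipartite [Fintype V] {f : V → Bool} (n : ℕ) : ∀ Δ : Finset (Finset V), Δ.card = n →
    IsPosition Δ → ProperOn f Δ → grundy Δ = parityValue (vertexCount Δ) (edgeCount Δ) := by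
  induction n using Nat.strong_induction_on with
  | _ n ih =>
  intro Δ hn hΔ hf
  have key : ∀ σ ∈ Δ, grundy (takeawayMove Δ σ) =
      parityValue (vertexCount (takeawayMove Δ σ)) (edgeCount (takeawayMove Δ σ)) :=
    fun σ hσ => ih _ (hn ▸ card_move_lt hσ) _ rfl (hΔ.move σ)
      fun u v huv h => hf u v huv (move_subset _ _ h)
  have hedge : Odd (edgeCount Δ) → ∃ σ ∈ Δ, grundy (takeawayMove Δ σ) =
      parityValue (vertexCount Δ) (edgeCount Δ + 1) := by
    intro ho
    obtain ⟨e, he⟩ := Finset.card_pos.mp ho.pos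
    obtain ⟨heΔ, he2⟩ := Finset.mem_filter.mp he
    refine ⟨e, heΔ, ?_⟩
    rw [key e heΔ, vertexCount_move_edge hΔ he2]
    have := edgeCount_move_edge hΔ heΔ he2
    unfold parityValue
    omega
  have heven : Odd (vertexCount Δ) → ∃ σ ∈ Δ, grundy (takeawayMove Δ σ) =
      parityValue (vertexCount Δ + 1) (edgeCount Δ) := by
    intro ho
    obtain ⟨v, hv, r, hr⟩ := exists_even_posDegree hΔ hf ho
    refine ⟨{v}, hv, ?_⟩
    rw [key _ hv]
    have := edgeCount_move_vertex Δ v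
    have := vertexCount_move_vertex hv
    unfold parityValue
    omega
  have hoddv : Odd (edgeCount Δ) → ∃ σ ∈ Δ, grundy (takeawayMove Δ σ) =
      parityValue (vertexCount Δ + 1) (edgeCount Δ + 1) := by
    intro ho
    obtain ⟨v, -, r, hr⟩ := exists_odd_posDegree hf true ho
    have hv : {v} ∈ Δ := mem_of_posDegree_pos hΔ (by omega)
    refine ⟨{v}, hv, ?_⟩
    rw [key _ hv]
    have := edgeCount_move_vertex Δ v
    have := vertexCount_move_vertex hv
    unfold parityValue
    omega
  refine grundy_eq (fun σ hσ => ?_) (fun m hm => ?_)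
  · rw [key σ hσ]
    have := parity_move_ne hΔ hσ
    unfold parityValue
    omega
  · rw [Nat.odd_iff] at hedge heven hoddv
    by_cases h1 : m = parityValue (vertexCount Δ) (edgeCount Δ + 1)
    · rw [h1]; apply hedge; unfold parityValue at *; omega
    by_cases h2 : m = parityValue (vertexCount Δ + 1) (edgeCount Δ)
    · rw [h2]; apply heven; unfold parityValue at *; omega
    by_cases h3 : m = parityValue (vertexCount Δ + 1) (edgeCount Δ + 1)
    · rw [h3]; apply hoddv; unfold parityValue at *; omega
    · unfold parityValue at *; omega

/-! ### Positions containing the odd cycle -/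

/-- The position `K` has a distinguished odd cycle, whose cells form `Z`, and no edge other than
`{A, B}` leads from the cycle to the rest of the graph. That the cycle is odd and that `K` contains
no other cycle of odd length is encoded by `colouring`: for each edge `e` of `Z` there is a
`2`-colouring of the vertices for which `e` is the only monochromatic edge of `K`. -/
structure OddCycleBranch (K Z : Finset (Finset V)) (A B : V) : Prop where
  posZ : IsPosition Z
  colouring : ∀ e ∈ Z, e.card = 2 → ∃ f : V → Bool, ∀ u v, u ≠ v →
    ({u, v} : Finset V) ∈ K → ({u, v} ≠ e ↔ f u ≠ f v)
  attach : ∀ t ∈ K, t.card = 2 → ∀ x ∈ t, {x} ∈ Z → t ∈ Z ∨ t = {A, B}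
  degZ : ∀ x, {x} ∈ Z → posDegree Z x = 2
  memA : {A} ∈ Z
  notMemB : {B} ∉ Z

namespace OddCycleBranch

variable {K Z Δ : Finset (Finset V)} {A B : V}

lemma ne (D : OddCycleBranch K Z A B) : A ≠ B := by
  rintro rfl
  exact D.notMemB D.memA

lemma pair_notMem (D : OddCycleBranch K Z A B) : {A, B} ∉ Z :=
  fun h => D.notMemB (D.posZ.2 _ h B (by simp))

lemma exists_edge (D : OddCycleBranch K Z A B) {x : V} (hx : {x} ∈ Z) :
    ∃ e ∈ Z, e.card = 2 ∧ x ∈ e := by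
  have h := D.degZ x hx
  obtain ⟨e, he⟩ := Finset.card_pos.mp (h ▸ two_pos : 0 < posDegree Z x)
  exact ⟨e, by simpa using he⟩

lemma exists_ne (D : OddCycleBranch K Z A B) : ∃ x, x ≠ A ∧ {x} ∈ Z := by
  obtain ⟨e, he, he2, hAe⟩ := D.exists_edge D.memA
  obtain ⟨x, hx, hxA⟩ := Finset.exists_mem_ne (he2 ▸ one_lt_two : 1 < e.card) A
  exact ⟨x, hxA, D.posZ.2 e he x hx⟩

lemma posDegree_eq_two (D : OddCycleBranch K Z A B) (hZ : Z ⊆ Δ) (hK : Δ ⊆ K) {x : V}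
    (hx : {x} ∈ Z) (hAB : x = A → {A, B} ∉ Δ) : posDegree Δ x = 2 := by
  rw [← D.degZ x hx, posDegree, posDegree]
  congr 1
  ext t
  simp only [Finset.mem_filter]
  refine ⟨fun ⟨ht, h2, hxt⟩ => ⟨?_, h2, hxt⟩, fun ⟨ht, h⟩ => ⟨hZ ht, h⟩⟩
  rcases D.attach t (hK ht) h2 x hxt hx with h | rfl
  · exact h
  · rcases Finset.mem_insert.mp hxt with rfl | h
    · exact absurd ht (hAB rfl)
    · exact absurd (Finset.mem_singleton.mp h ▸ hx) D.notMemB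

lemma posDegree_A (D : OddCycleBranch K Z A B) (hZ : Z ⊆ Δ) (hK : Δ ⊆ K)
    (hAB : {A, B} ∈ Δ) : posDegree Δ A = 3 := by
  have : (Δ.filter fun t => t.card = 2 ∧ A ∈ t) =
      insert {A, B} (Z.filter fun t => t.card = 2 ∧ A ∈ t) := by
    ext t
    simp only [Finset.mem_filter, Finset.mem_insert]
    constructor
    · rintro ⟨ht, h2, hA⟩
      rcases D.attach t (hK ht) h2 A hA D.memA with h | rfl
      · exact Or.inr ⟨h, h2, hA⟩
      · exact Or.inl rfl
    · rintro (rfl | ⟨ht, h⟩)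
      · exact ⟨hAB, Finset.card_pair D.ne, by simp⟩
      · exact ⟨hZ ht, h⟩
  rw [posDegree, this, Finset.card_insert_of_notMem (by simp [D.pair_notMem])]
  have := D.degZ A D.memA
  rw [posDegree] at this
  omega

/-- Deleting any cell of the cycle leaves a bipartite graph. -/
lemma grundy_move_cycle [Fintype V] (D : OddCycleBranch K Z A B) (hΔ : IsPosition Δ)
    (hK : Δ ⊆ K) {σ : Finset V} (hσ : σ ∈ Z) : grundy (takeawayMove Δ σ) =
      parityValue (vertexCount (takeawayMove Δ σ)) (edgeCount (takeawayMove Δ σ)) := by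
  obtain ⟨e, heZ, he2, hσe⟩ : ∃ e ∈ Z, e.card = 2 ∧ σ ⊆ e := by
    rcases D.posZ.1 σ hσ with h | h
    · obtain ⟨x, rfl⟩ := Finset.card_eq_one.mp h
      simpa using D.exists_edge hσ
    · exact ⟨σ, hσ, h, subset_rfl⟩
  obtain ⟨f, hf⟩ := D.colouring e heZ he2
  refine grundy_bipartite (f := f) _ _ rfl (hΔ.move σ) fun u v huv h => ?_
  refine (hf u v huv (hK (move_subset _ _ h))).mp ?_
  rintro rfl
  exact (mem_move.mp h).2 hσe

/-- A move outside the cycle keeps the cycle. -/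
lemma subset_move (D : OddCycleBranch K Z A B) {σ : Finset V} (hσ : σ ∉ Z)
    (hΔ : IsPosition Δ) (hσΔ : σ ∈ Δ) (hZ : Z ⊆ Δ) : Z ⊆ takeawayMove Δ σ := by
  intro t ht
  refine mem_move.mpr ⟨hZ ht, fun hs => hσ ?_⟩
  rcases hΔ.1 σ hσΔ with h | h
  · obtain ⟨x, rfl⟩ := Finset.card_eq_one.mp h
    exact D.posZ.2 t ht x (by simpa using hs)
  · have h2 := D.posZ.1 t ht
    rwa [Finset.eq_of_subset_of_card_le hs (by omega)]

lemma exists_move_edge [Fintype V] (D : OddCycleBranch K Z A B) (hΔ : IsPosition Δ) (hZ : Z ⊆ Δ)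
    (hK : Δ ⊆ K) : ∃ σ ∈ Δ, grundy (takeawayMove Δ σ) =
      parityValue (vertexCount Δ) (edgeCount Δ + 1) := by
  obtain ⟨e, heZ, he2, -⟩ := D.exists_edge D.memA
  refine ⟨e, hZ heZ, ?_⟩
  rw [D.grundy_move_cycle hΔ hK heZ, vertexCount_move_edge hΔ he2]
  have := edgeCount_move_edge hΔ (hZ heZ) he2
  unfold parityValue
  omega

lemma exists_move_vertex [Fintype V] (D : OddCycleBranch K Z A B) (hΔ : IsPosition Δ) (hZ : Z ⊆ Δ)
    (hK : Δ ⊆ K) : ∃ σ ∈ Δ, grundy (takeawayMove Δ σ) =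
      parityValue (vertexCount Δ + 1) (edgeCount Δ) := by
  obtain ⟨x, hxA, hx⟩ := D.exists_ne
  refine ⟨{x}, hZ hx, ?_⟩
  rw [D.grundy_move_cycle hΔ hK hx]
  have := D.posDegree_eq_two hZ hK hx (fun h => absurd h hxA)
  have := edgeCount_move_vertex Δ x
  have := vertexCount_move_vertex (hZ hx)
  unfold parityValue
  omega

lemma exists_move_A [Fintype V] (D : OddCycleBranch K Z A B) (hΔ : IsPosition Δ) (hZ : Z ⊆ Δ)
    (hK : Δ ⊆ K) (hAB : {A, B} ∈ Δ) : ∃ σ ∈ Δ, grundy (takeawayMove Δ σ) =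
      parityValue (vertexCount Δ + 1) (edgeCount Δ + 1) := by
  refine ⟨{A}, hZ D.memA, ?_⟩
  rw [D.grundy_move_cycle hΔ hK D.memA]
  have := D.posDegree_A hZ hK hAB
  have := edgeCount_move_vertex Δ A
  have := vertexCount_move_vertex (hZ D.memA)
  unfold parityValue
  omega

/-- If the cycle is an isolated component and the number of edges is even, some vertex off the
cycle has odd degree: delete an edge `e` of the cycle and count the remaining, odd number of edges
from the colour class that avoids the endpoints of `e`. -/
lemma exists_odd_off_cycle [Fintype V] (D : OddCycleBranch K Z A B) (hΔ : IsPosition Δ) (hZ : Z ⊆ Δ)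
    (hK : Δ ⊆ K) (hAB : {A, B} ∉ Δ) (heven : edgeCount Δ % 2 = 0) :
    ∃ y, {y} ∈ Δ ∧ {y} ∉ Z ∧ posDegree Δ y % 2 = 1 := by
  obtain ⟨e, heZ, he2, hAe⟩ := D.exists_edge D.memA
  obtain ⟨f, hf⟩ := D.colouring e heZ he2
  have hprop : ProperOn f (takeawayMove Δ e) := by
    intro u v huv h
    rw [mem_move_edge hΔ he2] at h
    exact (hf u v huv (hK h.1)).mp h.2
  have hcount := edgeCount_move_edge hΔ (hZ heZ) he2
  obtain ⟨y, hfy, hy⟩ := exists_odd_posDegree hprop (!f A) (Nat.odd_iff.mpr (by omega))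
  have hye : y ∉ e := by
    intro hye
    have hyA : y ≠ A := by rintro rfl; simp at hfy
    have : e = {A, y} := by
      refine (Finset.eq_of_subset_of_card_le ?_ ?_).symm
      · intro z hz
        rcases Finset.mem_insert.mp hz with rfl | hz
        · exact hAe
        · rwa [Finset.mem_singleton.mp hz]
      · rw [he2, Finset.card_pair hyA.symm]
    have h1 := hf A y hyA.symm (this ▸ hK (hZ heZ))
    rw [hfy] at h1
    simp [← this] at h1
  have hdeg : posDegree (takeawayMove Δ e) y = posDegree Δ y := by
    rw [posDegree, posDegree]
    congr 1
    ext t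
    simp only [Finset.mem_filter, mem_move_edge hΔ he2]
    refine ⟨fun ⟨⟨h, _⟩, h'⟩ => ⟨h, h'⟩, fun ⟨h, h'⟩ => ⟨⟨h, ?_⟩, h'⟩⟩
    rintro rfl
    exact hye h'.2
  rw [hdeg, Nat.odd_iff] at hy
  refine ⟨y, mem_of_posDegree_pos hΔ (by omega), fun hyZ => ?_, hy⟩
  have := D.posDegree_eq_two hZ hK hyZ (fun _ => hAB)
  omega

/-- Once the odd cycle is an isolated component, the nim-value is the bipartite one xor `3`. -/
lemma grundy_isolated [Fintype V] (D : OddCycleBranch K Z A B) (n : ℕ) : ∀ Δ : Finset (Finset V),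
    Δ.card = n → IsPosition Δ → Z ⊆ Δ → Δ ⊆ K → {A, B} ∉ Δ →
    grundy Δ = parityValue (vertexCount Δ + 1) (edgeCount Δ + 1) := by
  induction n using Nat.strong_induction_on with
  | _ n ih =>
  intro Δ hn hΔ hZ hK hAB
  have key : ∀ σ ∈ Δ, σ ∉ Z → grundy (takeawayMove Δ σ) =
      parityValue (vertexCount (takeawayMove Δ σ) + 1) (edgeCount (takeawayMove Δ σ) + 1) :=
    fun σ hσ hσZ => ih _ (hn ▸ card_move_lt hσ) _ rfl (hΔ.move σ) (D.subset_move hσZ hΔ hσ hZ)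
      ((move_subset _ _).trans hK) (fun h => hAB (move_subset _ _ h))
  refine grundy_eq (fun σ hσ => ?_) (fun m hm => ?_)
  · by_cases hσZ : σ ∈ Z
    · rw [D.grundy_move_cycle hΔ hK hσZ]
      rcases hΔ.1 σ hσ with h1 | h2
      · obtain ⟨x, rfl⟩ := Finset.card_eq_one.mp h1
        have := D.posDegree_eq_two hZ hK hσZ (fun _ => hAB)
        have := edgeCount_move_vertex Δ x
        have := vertexCount_move_vertex hσ
        unfold parityValue
        omega
      · have := edgeCount_move_edge hΔ hσ h2
        have := vertexCount_move_edge hΔ h2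
        unfold parityValue
        omega
    · rw [key σ hσ hσZ]
      have := parity_move_ne hΔ hσ
      unfold parityValue
      omega
  · by_cases h1 : m = parityValue (vertexCount Δ) (edgeCount Δ + 1)
    · exact h1 ▸ D.exists_move_edge hΔ hZ hK
    by_cases h2 : m = parityValue (vertexCount Δ + 1) (edgeCount Δ)
    · exact h2 ▸ D.exists_move_vertex hΔ hZ hK
    have h3 : m = parityValue (vertexCount Δ) (edgeCount Δ) ∧ edgeCount Δ % 2 = 0 := by
      unfold parityValue at *
      omega
    obtain ⟨y, hy, hyZ, hydeg⟩ := D.exists_odd_off_cycle hΔ hZ hK hAB h3.2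
    refine ⟨{y}, hy, ?_⟩
    rw [key _ hy hyZ, h3.1]
    have := edgeCount_move_vertex Δ y
    have := vertexCount_move_vertex hy
    unfold parityValue
    omega

/-- The cycle with its branch still attached, together with any forest. The moves on the cycle
reach the three values below `4` other than the bipartite value `p`. If `B` has odd degree then
deleting `B` reaches `p` too; if `B` has even degree then no move reaches `p`. -/
lemma grundy_attached [Fintype V] (D : OddCycleBranch K Z A B) (n : ℕ) : ∀ Δ : Finset (Finset V),
    Δ.card = n → IsPosition Δ → Z ⊆ Δ → Δ ⊆ K → {A, B} ∈ Δ →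
    (posDegree Δ B % 2 = 1 → 4 ≤ grundy Δ) ∧
    (posDegree Δ B % 2 = 0 → grundy Δ = parityValue (vertexCount Δ) (edgeCount Δ)) := by
  induction n using Nat.strong_induction_on with
  | _ n ih =>
  intro Δ hn hΔ hZ hK hAB
  have hBΔ : {B} ∈ Δ := hΔ.2 _ hAB B (by simp)
  have hdetach : ∀ σ ∈ Δ, σ ∉ Z → {A, B} ∉ takeawayMove Δ σ → grundy (takeawayMove Δ σ) =
      parityValue (vertexCount (takeawayMove Δ σ) + 1) (edgeCount (takeawayMove Δ σ) + 1) :=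
    fun σ hσ hσZ h => D.grundy_isolated _ _ rfl (hΔ.move σ) (D.subset_move hσZ hΔ hσ hZ)
      ((move_subset _ _).trans hK) h
  have hB_edges := edgeCount_move_vertex Δ B
  have hB_vertices := vertexCount_move_vertex hBΔ
  have hdelB := hdetach {B} hBΔ D.notMemB (by simp [mem_move])
  have hreach : ∀ m < 4, m ≠ parityValue (vertexCount Δ) (edgeCount Δ) →
      ∃ σ ∈ Δ, grundy (takeawayMove Δ σ) = m := by
    intro m hm hne
    by_cases h1 : m = parityValue (vertexCount Δ) (edgeCount Δ + 1)
    · exact h1 ▸ D.exists_move_edge hΔ hZ hK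
    by_cases h2 : m = parityValue (vertexCount Δ + 1) (edgeCount Δ)
    · exact h2 ▸ D.exists_move_vertex hΔ hZ hK
    by_cases h3 : m = parityValue (vertexCount Δ + 1) (edgeCount Δ + 1)
    · exact h3 ▸ D.exists_move_A hΔ hZ hK hAB
    unfold parityValue at *
    omega
  constructor
  · intro hodd
    refine le_grundy fun m hm => ?_
    by_cases h : m = parityValue (vertexCount Δ) (edgeCount Δ)
    · refine ⟨{B}, hBΔ, ?_⟩
      rw [hdelB, h]
      unfold parityValue
      omega
    · exact hreach m hm h
  · intro heven
    refine grundy_eq (fun σ hσ => ?_) (fun m hm => ?_)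
    · have hne := parity_move_ne hΔ hσ
      by_cases hσZ : σ ∈ Z
      · rw [D.grundy_move_cycle hΔ hK hσZ]
        unfold parityValue
        omega
      by_cases hABσ : {A, B} ∈ takeawayMove Δ σ
      · obtain ⟨h1, h2⟩ := ih _ (hn ▸ card_move_lt hσ) _ rfl (hΔ.move σ)
          (D.subset_move hσZ hΔ hσ hZ) ((move_subset _ _).trans hK) hABσ
        rcases Nat.mod_two_eq_zero_or_one (posDegree (takeawayMove Δ σ) B) with h | h
        · rw [h2 h]
          unfold parityValue
          omega
        · have := h1 h
          unfold parityValue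
          omega
      · have hg := hdetach σ hσ hσZ hABσ
        have hsub : σ ⊆ {A, B} := by
          by_contra h
          exact hABσ (mem_move.mpr ⟨hAB, h⟩)
        rcases hΔ.1 σ hσ with h1 | h2
        · obtain ⟨x, rfl⟩ := Finset.card_eq_one.mp h1
          have hxB : x = B := by
            rcases Finset.mem_insert.mp (Finset.singleton_subset_iff.mp hsub) with rfl | h
            · exact absurd D.memA hσZ
            · exact Finset.mem_singleton.mp h
          subst hxB
          rw [hg]
          unfold parityValue
          omega
        · have := edgeCount_move_edge hΔ hσ h2
          have := vertexCount_move_edge hΔ h2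
          rw [hg]
          unfold parityValue
          omega
    · exact hreach m (by unfold parityValue at hm; omega) hm.ne

end OddCycleBranch

end ChompAux

/-! ### From the graph to its complex -/

section GraphAux

variable {V : Type*} [DecidableEq V]

/-- Unordered pairs are equal as finsets exactly when they are equal in `Sym2`. -/
lemma pair_eq_pair_iff {a b u v : V} :
    ({a, b} : Finset V) = {u, v} ↔ s(a, b) = s(u, v) := by
  rw [Sym2.eq_iff, ← Finset.coe_inj]
  push_cast
  exact Set.pair_eq_pair_iff

variable [Fintype V]

/-- The vertices and edges of a subgraph, as singletons and pairs. -/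
noncomputable def subgraphCells {G : SimpleGraph V} (H : G.Subgraph) : Finset (Finset V) :=
  (Finset.univ.filter fun v => v ∈ H.verts).image (fun v => ({v} : Finset V)) ∪
    Finset.univ.filter (fun s : Finset V => ∃ u v, H.Adj u v ∧ s = {u, v})

lemma mem_subgraphCells {G : SimpleGraph V} {H : G.Subgraph} {s : Finset V} :
    s ∈ subgraphCells H ↔ (∃ v ∈ H.verts, s = {v}) ∨ ∃ u v, H.Adj u v ∧ s = {u, v} := by
  simp only [subgraphCells, Finset.mem_union, Finset.mem_image, Finset.mem_filter,
    Finset.mem_univ, true_and, eq_comm]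

lemma graphComplex_eq (G : SimpleGraph V) :
    graphComplex G = subgraphCells (⊤ : G.Subgraph) := by
  ext s
  rw [mem_subgraphCells]
  simp [graphComplex, eq_comm]

lemma isPosition_subgraphCells {G : SimpleGraph V} (H : G.Subgraph) :
    IsPosition (subgraphCells H) := by
  refine ⟨fun t ht => ?_, fun t ht x hx => ?_⟩
  · rcases mem_subgraphCells.mp ht with ⟨v, -, rfl⟩ | ⟨u, v, huv, rfl⟩
    · simp
    · exact Or.inr (Finset.card_pair huv.ne)
  · refine mem_subgraphCells.mpr (Or.inl ⟨x, ?_, rfl⟩)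
    rcases mem_subgraphCells.mp ht with ⟨v, hv, rfl⟩ | ⟨u, v, huv, rfl⟩
    · rwa [Finset.mem_singleton.mp hx]
    · rcases Finset.mem_insert.mp hx with rfl | hx
      · exact huv.fst_mem
      · rw [Finset.mem_singleton.mp hx]
        exact huv.snd_mem

lemma singleton_mem_subgraphCells {G : SimpleGraph V} {H : G.Subgraph} {x : V} :
    {x} ∈ subgraphCells H ↔ x ∈ H.verts := by
  rw [mem_subgraphCells]
  constructor
  · rintro (⟨v, hv, h⟩ | ⟨u, v, huv, h⟩)
    · rwa [Finset.singleton_injective h]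
    · have := congrArg Finset.card h
      rw [Finset.card_pair huv.ne] at this
      simp at this
  · exact fun h => Or.inl ⟨x, h, rfl⟩

lemma pair_mem_subgraphCells {G : SimpleGraph V} {H : G.Subgraph} {x y : V} (hxy : x ≠ y) :
    {x, y} ∈ subgraphCells H ↔ H.Adj x y := by
  rw [mem_subgraphCells]
  constructor
  · rintro (⟨v, hv, h⟩ | ⟨u, v, huv, h⟩)
    · have := congrArg Finset.card h
      rw [Finset.card_pair hxy] at this
      simp at this
    · rcases Sym2.eq_iff.mp (pair_eq_pair_iff.mp h) with ⟨rfl, rfl⟩ | ⟨rfl, rfl⟩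
      · exact huv
      · exact huv.symm
  · exact fun h => Or.inr ⟨x, y, h, rfl⟩

lemma posDegree_subgraphCells {G : SimpleGraph V} (H : G.Subgraph) (x : V) :
    posDegree (subgraphCells H) x = (H.neighborSet x).ncard := by
  have hinj : Set.InjOn (fun w : V => ({x, w} : Finset V)) (H.neighborSet x) := by
    intro a ha b hb hab
    rcases Sym2.eq_iff.mp (pair_eq_pair_iff.mp hab) with ⟨-, h⟩ | ⟨h, h'⟩
    · exact h
    · exact h'.trans h
  rw [posDegree, ← hinj.ncard_image, ← Set.ncard_coe_finset]
  congr 1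
  ext t
  simp only [Finset.coe_filter, Set.mem_ofPred_eq, Set.mem_image,
    SimpleGraph.Subgraph.mem_neighborSet]
  constructor
  · rintro ⟨ht, h2, hx⟩
    obtain ⟨u, v, huv, rfl⟩ := Finset.card_eq_two.mp h2
    rw [pair_mem_subgraphCells huv] at ht
    rcases Finset.mem_insert.mp hx with rfl | hx
    · exact ⟨v, ht, rfl⟩
    · rw [Finset.mem_singleton.mp hx]
      exact ⟨u, ht.symm, Finset.pair_comm _ _⟩
  · rintro ⟨w, hw, rfl⟩
    exact ⟨(pair_mem_subgraphCells hw.ne).mpr hw, Finset.card_pair hw.ne, by simp⟩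

lemma vertexCount_graphComplex (G : SimpleGraph V) :
    vertexCount (graphComplex G) = Fintype.card V := by
  rw [graphComplex_eq, vertexCount, ← Finset.card_univ,
    ← Finset.card_image_of_injective _ (Finset.singleton_injective (α := V))]
  congr 1
  ext t
  simp only [Finset.mem_filter, Finset.mem_image, Finset.mem_univ, true_and]
  constructor
  · rintro ⟨-, h⟩
    obtain ⟨v, rfl⟩ := Finset.card_eq_one.mp h
    exact ⟨v, rfl⟩
  · rintro ⟨v, rfl⟩
    exact ⟨singleton_mem_subgraphCells.mpr (by simp), by simp⟩

lemma edgeCount_graphComplex (G : SimpleGraph V) [DecidableRel G.Adj] :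
    edgeCount (graphComplex G) = G.edgeFinset.card := by
  rw [graphComplex_eq, edgeCount]
  symm
  refine Finset.card_bij (fun e _ => e.toFinset) ?_ ?_ ?_
  · intro e he
    induction e with | _ u v
    have huv : G.Adj u v := by simpa using he
    rw [Sym2.toFinset_mk_eq]
    simp only [Finset.mem_filter, pair_mem_subgraphCells huv.ne]
    exact ⟨by simpa using huv, Finset.card_pair huv.ne⟩
  · intro e he e' he' h
    induction e with | _ u v
    induction e' with | _ u' v'
    rw [Sym2.toFinset_mk_eq, Sym2.toFinset_mk_eq] at h
    exact pair_eq_pair_iff.mp h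
  · intro t ht
    obtain ⟨ht, h2⟩ := Finset.mem_filter.mp ht
    obtain ⟨u, v, huv, rfl⟩ := Finset.card_eq_two.mp h2
    rw [pair_mem_subgraphCells huv] at ht
    exact ⟨s(u, v), by simpa using ht, Sym2.toFinset_mk_eq⟩

/-- In a connected graph with as many edges as vertices, deleting an edge of a cycle leaves a tree;
in a `2`-colouring of it, that edge is monochromatic if the cycle is odd. -/
lemma exists_colouring (G : SimpleGraph V) [DecidableRel G.Adj] (hconn : G.Connected)
    (hpseudo : G.edgeFinset.card = Fintype.card V) {A : V} (c : G.Walk A A) (hc : c.IsCycle)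
    (hodd : Odd c.length) {a b : V} (hab : s(a, b) ∈ c.edges) :
    ∃ f : V → Bool, ∀ u v, G.Adj u v → (s(u, v) ≠ s(a, b) ↔ f u ≠ f v) := by
  have habG : G.Adj a b := c.adj_of_mem_edges hab
  have hconn' : (G.deleteEdges {s(a, b)}).Connected := by
    refine hconn.connected_delete_edge_of_not_isBridge fun hbr => ?_
    exact (SimpleGraph.isBridge_iff_forall_cycle_notMem habG).mp hbr c hc hab
  have htree : (G.deleteEdges {s(a, b)}).IsTree := by
    rw [SimpleGraph.isTree_iff_connected_and_card]
    refine ⟨hconn', ?_⟩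
    rw [SimpleGraph.edgeSet_deleteEdges, Nat.card_coe_set_eq,
      Set.ncard_sdiff_singleton_add_one (by simpa using habG), Nat.card_eq_fintype_card, ← hpseudo,
      ← SimpleGraph.coe_edgeFinset, Set.ncard_coe_finset]
  obtain ⟨col⟩ := htree.colorable_two
  have hcol : ∀ u v, G.Adj u v → s(u, v) ≠ s(a, b) → col u ≠ col v := by
    intro u v huv hne
    exact col.valid (by simpa using ⟨huv, by simpa using hne⟩)
  have hmono : col a = col b := by
    by_contra hne
    have hG : G.Colorable 2 := by
      refine ⟨SimpleGraph.Coloring.mk col fun {u v} huv => ?_⟩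
      by_cases h : s(u, v) = s(a, b)
      · rcases Sym2.eq_iff.mp h with ⟨rfl, rfl⟩ | ⟨rfl, rfl⟩
        · exact hne
        · exact Ne.symm hne
      · exact hcol u v huv h
    exact Nat.not_even_iff_odd.mpr hodd
      (SimpleGraph.two_colorable_iff_forall_loop_even.mp hG A c)
  have hfin : ∀ i j : Fin 2, decide (i = 0) = decide (j = 0) ↔ i = j := by decide
  refine ⟨fun v => decide (col v = 0), fun u v huv => ?_⟩
  rw [Ne, Ne, hfin, not_iff_not]
  refine ⟨fun h => ?_, fun h => by_contra fun hne => hcol u v huv hne h⟩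
  rcases Sym2.eq_iff.mp h with ⟨rfl, rfl⟩ | ⟨rfl, rfl⟩
  · exact hmono
  · exact hmono.symm

/-- The degree conditions force every edge at a cycle vertex to lie on the cycle or to be the edge
from `A` to `B`: two of the edges at the vertex belong to the cycle already. -/
lemma adj_cycle_or (G : SimpleGraph V) [DecidableRel G.Adj] {A B : V} (c : G.Walk A A)
    (hc : c.IsCycle) (hA : G.degree A = 3)
    (hdeg : ∀ v ∈ c.support, v ≠ A → G.degree v = 2)
    (hB : G.Adj A B) (hBnot : B ∉ c.support) {x w : V} (hx : x ∈ c.support)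
    (hxw : G.Adj x w) : c.toSubgraph.Adj x w ∨ (x = A ∧ w = B) := by
  have h2 := hc.ncard_neighborSet_toSubgraph_eq_two hx
  have hG : (G.neighborSet x).ncard = G.degree x := by
    rw [← SimpleGraph.card_neighborFinset_eq_degree, ← Set.ncard_coe_finset,
      SimpleGraph.coe_neighborFinset]
  have hsub := c.toSubgraph.neighborSet_subset x
  by_cases hxA : x = A
  · subst hxA
    have hBn : B ∉ c.toSubgraph.neighborSet x := fun h =>
      hBnot (c.mem_verts_toSubgraph.mp (SimpleGraph.Subgraph.Adj.snd_mem h))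
    have heq : insert B (c.toSubgraph.neighborSet x) = G.neighborSet x := by
      refine Set.eq_of_subset_of_ncard_le (Set.insert_subset hB hsub) ?_ (Set.toFinite _)
      rw [Set.ncard_insert_of_notMem hBn (Set.toFinite _)]
      omega
    have hw : w ∈ insert B (c.toSubgraph.neighborSet x) := heq ▸ hxw
    rcases hw with rfl | hw
    · exact Or.inr ⟨rfl, rfl⟩
    · exact Or.inl hw
  · have heq : c.toSubgraph.neighborSet x = G.neighborSet x := by
      refine Set.eq_of_subset_of_ncard_le hsub ?_ (Set.toFinite _)
      rw [hG, h2, hdeg x hx hxA]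
    have hw : w ∈ c.toSubgraph.neighborSet x := heq ▸ hxw
    exact Or.inl hw

lemma oddCycleBranch (G : SimpleGraph V) [DecidableRel G.Adj] (hconn : G.Connected)
    (hpseudo : G.edgeFinset.card = Fintype.card V) {A B : V} (c : G.Walk A A) (hc : c.IsCycle)
    (hodd : Odd c.length) (hA : G.degree A = 3)
    (hdeg : ∀ v ∈ c.support, v ≠ A → G.degree v = 2)
    (hB : G.Adj A B) (hBnot : B ∉ c.support) :
    OddCycleBranch (graphComplex G) (subgraphCells c.toSubgraph) A B where
  posZ := isPosition_subgraphCells _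
  colouring := by
    intro e he he2
    obtain ⟨a, b, hab, rfl⟩ := Finset.card_eq_two.mp he2
    rw [pair_mem_subgraphCells hab] at he
    obtain ⟨f, hf⟩ := exists_colouring G hconn hpseudo c hc hodd
      (c.mem_edges_toSubgraph.mp (SimpleGraph.Subgraph.mem_edgeSet.mpr he))
    refine ⟨f, fun u v huv h => ?_⟩
    rw [graphComplex_eq, pair_mem_subgraphCells huv] at h
    rw [← hf u v (by simpa using h), Ne, Ne, pair_eq_pair_iff]
  attach := by
    intro t ht ht2 x hxt hx
    rw [singleton_mem_subgraphCells, c.mem_verts_toSubgraph] at hx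
    obtain ⟨w, hxw, rfl⟩ : ∃ w, x ≠ w ∧ t = {x, w} := by
      obtain ⟨u, v, huv, rfl⟩ := Finset.card_eq_two.mp ht2
      rcases Finset.mem_insert.mp hxt with rfl | h
      · exact ⟨v, huv, rfl⟩
      · rw [Finset.mem_singleton.mp h]
        exact ⟨u, huv.symm, Finset.pair_comm _ _⟩
    rw [graphComplex_eq, pair_mem_subgraphCells hxw] at ht
    rcases adj_cycle_or G c hc hA hdeg hB hBnot hx (by simpa using ht) with h | ⟨rfl, rfl⟩
    · exact Or.inl ((pair_mem_subgraphCells hxw).mpr h)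
    · exact Or.inr rfl
  degZ := by
    intro x hx
    rw [singleton_mem_subgraphCells, c.mem_verts_toSubgraph] at hx
    rw [posDegree_subgraphCells, hc.ncard_neighborSet_toSubgraph_eq_two hx]
  memA := by simp [singleton_mem_subgraphCells]
  notMemB := by simpa [singleton_mem_subgraphCells] using hBnot

end GraphAux

/-- Let `G` be a pseudotree in simplest form whose unique cycle `c` has odd
length, where the vertex `A` of the cycle has degree `3`, every other cycle vertex has
degree `2`, and `B` is the neighbor of `A` off the cycle.  If `B` has odd degree then
`g(G) ≥ 4`; if `B` has even degree then `g(G) = 3` when `v(G)` is odd and `g(G) = 0` when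
`v(G)` is even. -/
theorem grundy_odd_pseudotree_one_branch {V : Type*} [Fintype V] [DecidableEq V]
    (G : SimpleGraph V) [DecidableRel G.Adj]
    (hconn : G.Connected) (hpseudo : G.edgeFinset.card = Fintype.card V)
    (hsimplest : SimplestForm G)
    (A B : V) (c : G.Walk A A) (hc : c.IsCycle) (hodd : Odd c.length)
    (hA : G.degree A = 3)
    (hdeg : ∀ v ∈ c.support, v ≠ A → G.degree v = 2)
    (hB : G.Adj A B) (hBnot : B ∉ c.support) :
    (Odd (G.degree B) → 4 ≤ grundy (graphComplex G)) ∧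
    (Even (G.degree B) → Odd (Fintype.card V) → grundy (graphComplex G) = 3) ∧
    (Even (G.degree B) → Even (Fintype.card V) → grundy (graphComplex G) = 0) := by
  have D := oddCycleBranch G hconn hpseudo c hc hodd hA hdeg hB hBnot
  have hpos : IsPosition (graphComplex G) := graphComplex_eq G ▸ isPosition_subgraphCells _
  have hsub : subgraphCells c.toSubgraph ⊆ graphComplex G := by
    intro t ht
    rw [graphComplex_eq, mem_subgraphCells]
    rcases mem_subgraphCells.mp ht with ⟨v, -, rfl⟩ | ⟨u, v, huv, rfl⟩
    · exact Or.inl ⟨v, by simp, rfl⟩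
    · exact Or.inr ⟨u, v, by simpa using huv.adj_sub, rfl⟩
  have hAB : {A, B} ∈ graphComplex G := by
    rw [graphComplex_eq, pair_mem_subgraphCells hB.ne]
    simpa using hB
  have hdegB : posDegree (graphComplex G) B = G.degree B := by
    rw [graphComplex_eq, posDegree_subgraphCells, ← SimpleGraph.card_neighborFinset_eq_degree,
      ← Set.ncard_coe_finset, SimpleGraph.coe_neighborFinset]
    rfl
  obtain ⟨h1, h2⟩ := D.grundy_attached _ _ rfl hpos hsub subset_rfl hAB
  rw [hdegB, vertexCount_graphComplex, edgeCount_graphComplex, hpseudo] at h2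
  rw [hdegB] at h1
  refine ⟨fun h => h1 (Nat.odd_iff.mp h), fun h hv => ?_, fun h hv => ?_⟩
  · rw [h2 (Nat.even_iff.mp h), parityValue, Nat.odd_iff.mp hv]
  · rw [h2 (Nat.even_iff.mp h), parityValue, Nat.even_iff.mp hv]
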